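/- A finite family of finite games has a family of mixed strategy Nash equilibria: if Λ is a nonempty finite index set and for each λ ∈ Λ there is a finite game Γ(λ) (a nonempty finite set of players I λ, nonempty finite strategy sets S λ i, and payoff functions u λ i : (Π j, S λ j) → ℝ), then there exists a function assigning to each λ ∈ Λ a mixed strategy profile σ*(λ) that is a Nash equilibrium of Γ(λ). -/

import Mathlib

/-!
By Nash's argument, an equilibrium is a fixed point of a continuous self-map of the compact convex
set of mixed profiles, in which each player shifts weight towards the pure strategies that beat
their current payoff. Brouwer's theorem provides the fixed point.

Brouwer's theorem is obtained analytically, following Milnor and Rogers. If `u` is Lipschitz and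
vanishes outside `s`, then `x ↦ x + t • u x` permutes `s` for small `t`, so that
`∫ x in s, det (1 + t • fderiv ℝ u x)` is the volume of `s`. The integrand is a polynomial in `t`,
so this holds for `t = 1` too. A `C¹` retraction of a ball onto its boundary sphere has singular
derivative, and taking `id + u` to be the retraction would make the integral vanish.
-/

open Function MeasureTheory Metric Set Topology
open scoped NNReal

section Determinant

open Polynomial in
lemma exists_polynomial_eval_eq_det_one_add_smul {R M : Type*} [CommRing R] [Nontrivial R]
    [AddCommGroup M] [Module R M] [Module.Free R M] [Module.Finite R M] (f : M →ₗ[R] M) :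
    ∃ p : R[X], p.natDegree ≤ Module.finrank R M ∧
      ∀ t : R, LinearMap.det (1 + t • f) = p.eval t := by
  classical
  let b := Module.Free.chooseBasis R M
  let A := LinearMap.toMatrix b b f
  refine ⟨((X : R[X]) • A.map C + (1 : Matrix _ _ R).map C).det, ?_, fun t => ?_⟩
  · rw [Module.finrank_eq_card_chooseBasisIndex]
    exact natDegree_det_X_add_C_le A 1
  · rw [add_comm, ← coe_evalRingHom, RingHom.map_det, ← LinearMap.det_toMatrix b, map_add,
      map_smul, LinearMap.toMatrix_one]
    congr 1
    ext i j
    simp [A, Matrix.one_apply, apply_ite (Polynomial.eval t), mul_comm t]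

lemma det_one_add_eq_sum_lagrange_basis {K V : Type*} [Field K] [DecidableEq K]
    [AddCommGroup V] [Module K V] [FiniteDimensional K V] {s : Finset K}
    (hs : Module.finrank K V < s.card) (f : V →ₗ[K] V) :
    LinearMap.det (1 + f) =
      ∑ t ∈ s, LinearMap.det (1 + t • f) * (Lagrange.basis s id t).eval 1 := by
  obtain ⟨p, hdeg, hp⟩ := exists_polynomial_eval_eq_det_one_add_smul f
  have hlt : p.degree < s.card :=
    (Polynomial.degree_le_of_natDegree_le hdeg).trans_lt (by exact_mod_cast hs)
  have hp_one : LinearMap.det (1 + f) = p.eval 1 := by rw [← hp, one_smul]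
  rw [hp_one, Lagrange.eq_interpolate (injOn_id _) hlt, Lagrange.interpolate_apply,
    Polynomial.eval_finsetSum]
  simp [hp]

lemma eventually_forall_norm_le_det_one_add_smul_pos {E : Type*} [NormedAddCommGroup E]
    [NormedSpace ℝ E] (C : ℝ) :
    ∀ᶠ t : ℝ in 𝓝 0, ∀ A : E →L[ℝ] E, ‖A‖ ≤ C → 0 < (1 + t • A).det := by
  have hdet : ∀ᶠ B in 𝓝 (1 : E →L[ℝ] E), 0 < B.det :=
    ContinuousLinearMap.continuous_det.continuousAt.eventually
      (lt_mem_nhds (by simp [ContinuousLinearMap.det]))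
  obtain ⟨δ, hδ, hball⟩ := Metric.eventually_nhds_iff.1 hdet
  have hsmall : ∀ᶠ t : ℝ in 𝓝 0, |t| * C < δ :=
    (by fun_prop : Continuous fun t : ℝ => |t| * C).continuousAt.eventually
      (gt_mem_nhds (by simpa using hδ))
  filter_upwards [hsmall] with t ht A hA
  refine hball ?_
  calc dist (1 + t • A) 1 = |t| * ‖A‖ := by
        rw [dist_eq_norm, add_sub_cancel_left, norm_smul, Real.norm_eq_abs]
    _ ≤ |t| * C := by gcongr
    _ < δ := ht

end Determinant

section LipschitzPerturbation

lemma bijective_id_add_of_lipschitzWith_lt_one {G : Type*} [NormedAddCommGroup G] [CompleteSpace G]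
    {v : G → G} {K : ℝ≥0} (hv : LipschitzWith K v) (hK : K < 1) :
    Bijective fun x => x + v x := by
  refine ⟨(AntilipschitzWith.id.add_lipschitzWith hv (by simpa)).injective, fun y => ?_⟩
  have hcontr : ContractingWith K fun x => y - v x :=
    ⟨hK, by simpa using (LipschitzWith.const y).sub hv⟩
  have hfix : y - v hcontr.fixedPoint = hcontr.fixedPoint := hcontr.fixedPoint_isFixedPt
  exact ⟨hcontr.fixedPoint, (sub_eq_iff_eq_add.1 hfix).symm⟩

lemma image_eq_self_of_bijective_of_eqOn_compl {α : Type*} {f : α → α} {s : Set α}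
    (hf : Bijective f) (hs : EqOn f id sᶜ) : f '' s = s := by
  rw [← compl_inj_iff, ← image_compl_eq hf, hs.image_eq, image_id]

lemma inter_frontier_nonempty_of_isPreconnected {X : Type*} [TopologicalSpace X] {s t : Set X}
    (ht : IsPreconnected t) (hmeet : (t ∩ s).Nonempty) (hmeet_compl : (t ∩ sᶜ).Nonempty) :
    (t ∩ frontier s).Nonempty := by
  by_contra! hdisj
  have hcover : t ⊆ interior s ∪ interior sᶜ := by
    rw [← compl_frontier_eq_union_interior]
    exact fun x hx hfr => (hdisj ▸ ⟨hx, hfr⟩ : x ∈ (∅ : Set X))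
  obtain ⟨x, hxt, hxs⟩ := hmeet
  obtain ⟨y, hyt, hys⟩ := hmeet_compl
  obtain ⟨z, -, hz, hz'⟩ := ht _ _ isOpen_interior isOpen_interior hcover
    ⟨x, hxt, (hcover hxt).resolve_right fun h => interior_subset h hxs⟩
    ⟨y, hyt, (hcover hyt).resolve_left fun h => hys (interior_subset h)⟩
  exact interior_subset hz' (interior_subset hz)

lemma lipschitzWith_indicator_of_frontier_eq_zero {E F : Type*} [NormedAddCommGroup E]
    [NormedSpace ℝ E] [SeminormedAddCommGroup F] {u : E → F} {s : Set E} {K : ℝ≥0}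
    (hs : IsClosed s) (hu : LipschitzOnWith K u s) (hfr : ∀ x ∈ frontier s, u x = 0) :
    LipschitzWith K (s.indicator u) := by
  have hmixed : ∀ x ∈ s, ∀ y ∉ s,
      dist (s.indicator u x) (s.indicator u y) ≤ K * dist x y := by
    intro x hx y hy
    obtain ⟨z, hz, hzfr⟩ : (segment ℝ x y ∩ frontier s).Nonempty :=
      inter_frontier_nonempty_of_isPreconnected (convex_segment x y).isPreconnected
        ⟨x, left_mem_segment ℝ x y, hx⟩ ⟨y, right_mem_segment ℝ x y, hy⟩
    calc dist (s.indicator u x) (s.indicator u y) = dist (u x) (u z) := by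
          rw [indicator_of_mem hx, indicator_of_notMem hy, hfr z hzfr]
      _ ≤ K * dist x z := hu.dist_le_mul x hx z (hs.frontier_subset hzfr)
      _ ≤ K * dist x y := by
          gcongr
          linarith [dist_add_dist_of_mem_segment hz, dist_nonneg (x := z) (y := y)]
  refine LipschitzWith.of_dist_le_mul fun x y => ?_
  by_cases hx : x ∈ s <;> by_cases hy : y ∈ s
  · simpa only [indicator_of_mem, hx, hy] using hu.dist_le_mul x hx y hy
  · exact hmixed x hx y hy
  · rw [dist_comm, dist_comm x]
    exact hmixed y hy x hx
  · simp only [indicator_of_notMem, hx, hy, not_false_eq_true, dist_self]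
    positivity

end LipschitzPerturbation

section VolumePreservation

variable {E : Type*} [NormedAddCommGroup E] [NormedSpace ℝ E] [FiniteDimensional ℝ E]
  [MeasurableSpace E] [BorelSpace E] (μ : Measure E) [μ.IsAddHaarMeasure]

lemma integral_det_eq_measureReal_of_image_eq_self {f : E → E} {f' : E → E →L[ℝ] E} {s : Set E}
    (hs : MeasurableSet s) (hμ : μ s ≠ ⊤) (hf : ∀ x ∈ s, HasFDerivWithinAt f (f' x) s x)
    (hinj : InjOn f s) (himage : f '' s = s) (hpos : ∀ x ∈ s, 0 < (f' x).det) :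
    IntegrableOn (fun x => (f' x).det) s μ ∧ ∫ x in s, (f' x).det ∂μ = μ.real s := by
  have habs : EqOn (fun x => |(f' x).det| • (1 : ℝ)) (fun x => (f' x).det) s := fun x hx => by
    simp [abs_of_pos (hpos x hx)]
  constructor
  · rw [← integrableOn_congr_fun habs hs,
      ← integrableOn_image_iff_integrableOn_abs_det_fderiv_smul μ hs hf hinj fun _ => 1, himage]
    exact integrableOn_const hμ
  · rw [← setIntegral_congr_fun hs habs,
      ← integral_image_eq_integral_abs_det_fderiv_smul μ hs hf hinj fun _ => 1, himage]
    simp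

variable {u : E → E} {K : ℝ≥0} {s : Set E}

lemma eventually_integral_det_one_add_smul_fderiv (hu : LipschitzWith K u)
    (hsupp : ∀ x ∉ s, u x = 0) (hdiff : ∀ x ∈ s, DifferentiableAt ℝ u x)
    (hs : MeasurableSet s) (hμ : μ s ≠ ⊤) :
    ∀ᶠ t : ℝ in 𝓝 0, IntegrableOn (fun x => (1 + t • fderiv ℝ u x).det) s μ ∧
      ∫ x in s, (1 + t • fderiv ℝ u x).det ∂μ = μ.real s := by
  have hsmall : ∀ᶠ t : ℝ in 𝓝 0, ‖t‖₊ * K < 1 :=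
    (by fun_prop : Continuous fun t : ℝ => ‖t‖₊ * K).continuousAt.eventually
      (gt_mem_nhds (by simp))
  filter_upwards [hsmall, eventually_forall_norm_le_det_one_add_smul_pos (E := E) K]
    with t ht hpos
  have hbij : Bijective fun x => x + t • u x :=
    bijective_id_add_of_lipschitzWith_lt_one ((lipschitzWith_smul t).comp hu) ht
  have himage : (fun x => x + t • u x) '' s = s :=
    image_eq_self_of_bijective_of_eqOn_compl hbij fun x hx => by simp [hsupp x hx]
  refine integral_det_eq_measureReal_of_image_eq_self μ hs hμ (fun x hx => ?_)
    hbij.injective.injOn himage fun x _ => hpos _ (norm_fderiv_le_of_lipschitz ℝ hu)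
  exact ((hasFDerivAt_id x).add ((hdiff x hx).hasFDerivAt.const_smul t)).hasFDerivWithinAt

lemma integral_det_one_add_fderiv (hu : LipschitzWith K u) (hsupp : ∀ x ∉ s, u x = 0)
    (hdiff : ∀ x ∈ s, DifferentiableAt ℝ u x) (hs : MeasurableSet s) (hμ : μ s ≠ ⊤) :
    ∫ x in s, (1 + fderiv ℝ u x).det ∂μ = μ.real s := by
  classical
  obtain ⟨T, hT, hcard⟩ := (infinite_of_mem_nhds (0 : ℝ)
    (eventually_integral_det_one_add_smul_fderiv μ hu hsupp hdiff hs hμ)).exists_subset_card_eq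
      (Module.finrank ℝ E + 1)
  calc ∫ x in s, (1 + fderiv ℝ u x).det ∂μ
    _ = ∫ x in s, ∑ t ∈ T,
          (1 + t • fderiv ℝ u x).det * (Lagrange.basis T id t).eval 1 ∂μ := by
        congr with x
        exact det_one_add_eq_sum_lagrange_basis (by omega) (fderiv ℝ u x : E →ₗ[ℝ] E)
    _ = ∑ t ∈ T, (∫ x in s, (1 + t • fderiv ℝ u x).det ∂μ) *
          (Lagrange.basis T id t).eval 1 := by
        rw [integral_finsetSum _ fun t ht => (hT ht).1.mul_const _]
        simp only [integral_mul_const]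
    _ = ∑ t ∈ T, μ.real s * (Lagrange.basis T id t).eval 1 :=
        Finset.sum_congr rfl fun t ht => by rw [(hT ht).2]
    _ = μ.real s := by
        rw [← Finset.mul_sum, ← Polynomial.eval_finsetSum,
          Lagrange.sum_basis (injOn_id _) (Finset.card_pos.1 (by omega)), Polynomial.eval_one,
          mul_one]

end VolumePreservation

lemma exists_lipschitzWith_one_retraction_of_convex {E : Type*} [NormedAddCommGroup E]
    [InnerProductSpace ℝ E] {s : Set E} (hne : s.Nonempty) (hcomplete : IsComplete s)
    (hconvex : Convex ℝ s) :
    ∃ P : E → E, LipschitzWith 1 P ∧ (∀ x, P x ∈ s) ∧ EqOn P id s := by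
  choose P hPs hP using exists_norm_eq_iInf_of_complete_convex hne hcomplete hconvex
  have hobtuse : ∀ x, ∀ w ∈ s, inner ℝ (x - P x) (w - P x) ≤ 0 := fun x =>
    (norm_eq_iInf_iff_real_inner_le_zero hconvex (hPs x)).1 (hP x)
  refine ⟨P, LipschitzWith.of_dist_le_mul fun x y => ?_, hPs, fun x hx => ?_⟩
  · have hsq : ‖P x - P y‖ * ‖P x - P y‖ ≤ ‖x - y‖ * ‖P x - P y‖ := by
      calc ‖P x - P y‖ * ‖P x - P y‖ = inner ℝ (P x - P y) (P x - P y) :=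
            (real_inner_self_eq_norm_mul_norm _).symm
        _ = inner ℝ (x - y) (P x - P y) + inner ℝ (x - P x) (P y - P x) +
              inner ℝ (y - P y) (P x - P y) := by
            simp only [inner_sub_left, inner_sub_right]; ring
        _ ≤ inner ℝ (x - y) (P x - P y) := by
            linarith [hobtuse x (P y) (hPs y), hobtuse y (P x) (hPs x)]
        _ ≤ ‖x - y‖ * ‖P x - P y‖ := real_inner_le_norm _ _
    rw [NNReal.coe_one, one_mul, dist_eq_norm, dist_eq_norm]
    rcases (norm_nonneg (P x - P y)).eq_or_lt with hzero | hpos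
    · exact hzero ▸ norm_nonneg _
    · exact le_of_mul_le_mul_right hsq hpos
  · have hself : inner ℝ (x - P x) (x - P x) ≤ 0 := hobtuse x x hx
    exact (sub_eq_zero.1 (real_inner_self_nonpos.1 hself)).symm

section Brouwer

variable {E : Type*} [NormedAddCommGroup E] [InnerProductSpace ℝ E] [FiniteDimensional ℝ E]

lemma det_fderiv_eq_zero_of_norm_eventually_eq {g : E → E} {x : E} {R : ℝ} (hR : R ≠ 0)
    (hg : DifferentiableAt ℝ g x) (hnorm : ∀ᶠ y in 𝓝 x, ‖g y‖ = R) :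
    (fderiv ℝ g x).det = 0 := by
  by_contra hdet
  have hunit : IsUnit (fderiv ℝ g x : E →ₗ[ℝ] E) :=
    (LinearMap.isUnit_iff_isUnit_det _).2 (isUnit_iff_ne_zero.2 hdet)
  obtain ⟨w, hw⟩ : ∃ w, fderiv ℝ g x w = g x := ((Module.End.isUnit_iff _).1 hunit).2 (g x)
  have hconst : HasFDerivAt (fun y => ‖g y‖ ^ 2) (0 : E →L[ℝ] ℝ) x :=
    (hasFDerivAt_const (R ^ 2) x).congr_of_eventuallyEq (hnorm.mono fun y hy => by simp only [hy])
  have hinner : inner ℝ (g x) (fderiv ℝ g x w) = 0 := by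
    simpa using DFunLike.congr_fun (hg.hasFDerivAt.norm_sq.unique hconst) w
  rw [hw, inner_self_eq_zero] at hinner
  exact hR (by simpa [hinner] using hnorm.self_of_nhds.symm)

lemma not_exists_contDiffOn_retraction_sphere {R : ℝ} (hR : 0 < R) :
    ¬ ∃ g : E → E, ContDiffOn ℝ 1 g (closedBall 0 R) ∧
      MapsTo g (closedBall 0 R) (sphere 0 R) ∧ EqOn g id (sphere 0 R) := by
  rintro ⟨g, hg, hmaps, hid⟩
  borelize E
  let u : E → E := (closedBall 0 R).indicator fun x => g x - x
  obtain ⟨K, hK⟩ : ∃ K, LipschitzOnWith K (fun x => g x - x) (closedBall (0 : E) R) :=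
    LocallyLipschitzOn.exists_lipschitzOnWith_of_compact (isCompact_closedBall _ _) <|
      (hg.sub contDiffOn_id).locallyLipschitzOn (convex_closedBall _ _)
  have hu : LipschitzWith K u :=
    lipschitzWith_indicator_of_frontier_eq_zero isClosed_closedBall hK fun x hx => by
      rw [hid (frontier_closedBall_subset_sphere hx), id, sub_self]
  have hsupp : ∀ x ∉ ball (0 : E) R, u x = 0 := fun x hx => indicator_apply_eq_zero.2 fun hx' => by
    rw [hid (by simp_all [le_antisymm_iff]), id, sub_self]
  have hgdiff : ∀ x ∈ ball (0 : E) R, DifferentiableAt ℝ g x := fun x hx =>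
    (hg.contDiffAt (closedBall_mem_nhds_of_mem hx)).differentiableAt one_ne_zero
  have huderiv : ∀ x ∈ ball (0 : E) R, HasFDerivAt u (fderiv ℝ g x - 1) x := fun x hx =>
    ((hgdiff x hx).hasFDerivAt.sub (hasFDerivAt_id x)).congr_of_eventuallyEq <|
      eqOn_indicator.eventuallyEq_of_mem (closedBall_mem_nhds_of_mem hx)
  have hvolume : ∫ x in ball (0 : E) R, (1 + fderiv ℝ u x).det = volume.real (ball (0 : E) R) :=
    integral_det_one_add_fderiv volume hu hsupp (fun x hx => (huderiv x hx).differentiableAt)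
      measurableSet_ball measure_ball_lt_top.ne
  have hsingular : ∫ x in ball (0 : E) R, (1 + fderiv ℝ u x).det = 0 :=
    setIntegral_eq_zero_of_forall_eq_zero fun x hx => by
      rw [(huderiv x hx).fderiv, add_sub_cancel]
      refine det_fderiv_eq_zero_of_norm_eventually_eq hR.ne' (hgdiff x hx) ?_
      filter_upwards [closedBall_mem_nhds_of_mem hx] with y hy
      simpa using hmaps hy
  have hpos : 0 < volume.real (ball (0 : E) R) :=
    ENNReal.toReal_pos (measure_ball_pos _ _ hR).ne' measure_ball_lt_top.ne
  exact hpos.ne' (hvolume.symm.trans hsingular)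

lemma exists_isFixedPt_of_contDiff_of_hasCompactSupport {f : E → E}
    (hf : ContDiff ℝ 1 f) (hsupp : HasCompactSupport f) : ∃ x, IsFixedPt f x := by
  by_contra! hfix
  have hne : ∀ x, x - f x ≠ 0 := fun x hx => hfix x (sub_eq_zero.1 hx).symm
  obtain ⟨R, hR, hzero⟩ := hsupp.exists_pos_le_norm
  refine not_exists_contDiffOn_retraction_sphere (E := E) hR
    ⟨fun x => (R / ‖x - f x‖) • (x - f x), ?_, fun x _ => ?_, fun x hx => ?_⟩
  · have hdiff : ContDiff ℝ 1 fun x => x - f x := contDiff_id.sub hf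
    exact ((contDiff_const.div (hdiff.norm ℝ hne) fun x => norm_ne_zero_iff.2 (hne x)).smul
      hdiff).contDiffOn
  · rw [mem_sphere_zero_iff_norm, norm_smul, norm_div, norm_norm, Real.norm_of_nonneg hR.le,
      div_mul_cancel₀ _ (norm_ne_zero_iff.2 (hne x))]
  · have hx : ‖x‖ = R := by simpa using hx
    simp [hzero x hx.ge, hx, hR.ne']

lemma exists_isFixedPt_of_continuous_of_hasCompactSupport {f : E → E}
    (hf : Continuous f) (hsupp : HasCompactSupport f) : ∃ x, IsFixedPt f x := by
  by_contra! hfix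
  obtain ⟨g, hg, hclose, hsub⟩ := hf.exists_contDiff_approx 1 (ε := fun x => dist x (f x))
    (by fun_prop) fun x => dist_pos.2 (Ne.symm (hfix x))
  obtain ⟨x, hx⟩ := exists_isFixedPt_of_contDiff_of_hasCompactSupport hg (hsupp.mono hsub)
  have hlt := hclose x
  rw [hx] at hlt
  exact lt_irrefl _ hlt

lemma exists_isFixedPt_of_continuous_of_norm_le {f : E → E} {M : ℝ}
    (hf : Continuous f) (hM : ∀ x, ‖f x‖ ≤ M) : ∃ x, IsFixedPt f x := by
  have hM_nonneg : 0 ≤ M := (norm_nonneg _).trans (hM 0)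
  let χ : ContDiffBump (0 : E) := ⟨M + 1, M + 2, by positivity, by linarith⟩
  obtain ⟨x, hx⟩ := exists_isFixedPt_of_continuous_of_hasCompactSupport
    (χ.continuous.smul hf) χ.hasCompactSupport.smul_right
  have hx : χ x • f x = x := hx
  have hnorm : ‖x‖ ≤ M + 1 := by
    calc ‖x‖ = χ x * ‖f x‖ := by rw [← Real.norm_of_nonneg χ.nonneg, ← norm_smul, hx]
      _ ≤ 1 * ‖f x‖ := by gcongr; exact χ.le_one
      _ ≤ M + 1 := by linarith [hM x]
  have hone : χ x = 1 := χ.one_of_mem_closedBall (by simpa using hnorm)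
  exact ⟨x, by rwa [hone, one_smul] at hx⟩

lemma exists_isFixedPt_of_isCompact_of_convex_inner {f : E → E} {s : Set E}
    (hne : s.Nonempty) (hcompact : IsCompact s) (hconvex : Convex ℝ s) (hf : ContinuousOn f s)
    (hmaps : MapsTo f s s) : ∃ x ∈ s, IsFixedPt f x := by
  obtain ⟨P, hPlip, hPs, hPid⟩ :=
    exists_lipschitzWith_one_retraction_of_convex hne hcompact.isComplete hconvex
  obtain ⟨M, hM⟩ := hcompact.isBounded.exists_norm_le
  obtain ⟨x, hx⟩ := exists_isFixedPt_of_continuous_of_norm_le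
    (hf.comp_continuous hPlip.continuous hPs) fun x => hM _ (hmaps (hPs x))
  have hx : f (P x) = x := hx
  have hxs : x ∈ s := hx ▸ hmaps (hPs x)
  exact ⟨x, hxs, by rwa [hPid hxs] at hx⟩

theorem exists_isFixedPt_of_isCompact_of_convex {V : Type*} [AddCommGroup V] [Module ℝ V]
    [TopologicalSpace V] [IsTopologicalAddGroup V] [ContinuousSMul ℝ V] [T2Space V]
    [FiniteDimensional ℝ V] {f : V → V} {s : Set V} (hne : s.Nonempty) (hcompact : IsCompact s)
    (hconvex : Convex ℝ s) (hf : ContinuousOn f s) (hmaps : MapsTo f s s) :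
    ∃ x ∈ s, IsFixedPt f x := by
  let e := toEuclidean (E := V)
  have hpre : MapsTo e.symm (e '' s) s := by rintro _ ⟨x, hx, rfl⟩; simpa
  obtain ⟨_, ⟨x, hx, rfl⟩, hfix⟩ := exists_isFixedPt_of_isCompact_of_convex_inner
    (f := e ∘ f ∘ e.symm) (hne.image e) (hcompact.image e.continuous)
    (hconvex.linear_image e.toLinearEquiv.toLinearMap)
    (e.continuous.comp_continuousOn (hf.comp e.symm.continuous.continuousOn hpre))
    fun y hy => mem_image_of_mem e (hmaps (hpre hy))
  exact ⟨x, hx, e.injective (by simpa [IsFixedPt] using hfix)⟩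

end Brouwer

section NashStep

variable {S : Type*} [Fintype S]

/-- The amount by which the pure strategy `a`, of payoff `w a`, beats the mixed strategy `x`. -/
def gain (x w : S → ℝ) (a : S) : ℝ := (w a - x ⬝ᵥ w)⁺

/-- Nash's adjustment of the mixed strategy `x` of a player whose pure strategies have the
payoffs `w`: each strategy receives additional weight equal to its gain, and the result is
normalized. -/
noncomputable def nashStep (x w : S → ℝ) (a : S) : ℝ :=
  (x a + gain x w a) / (1 + ∑ b, gain x w b)

lemma one_add_sum_gain_pos (x w : S → ℝ) : 0 < 1 + ∑ b, gain x w b :=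
  add_pos_of_pos_of_nonneg one_pos (Finset.sum_nonneg fun _ _ => posPart_nonneg _)

lemma nashStep_mem_stdSimplex {x : S → ℝ} (hx : x ∈ stdSimplex ℝ S) (w : S → ℝ) :
    nashStep x w ∈ stdSimplex ℝ S := by
  refine ⟨fun a => div_nonneg (add_nonneg (hx.1 a) (posPart_nonneg _))
    (one_add_sum_gain_pos x w).le, ?_⟩
  simp only [nashStep]
  rw [← Finset.sum_div, Finset.sum_add_distrib, hx.2, div_self (one_add_sum_gain_pos x w).ne']

lemma continuous_nashStep {X : Type*} [TopologicalSpace X] {x w : X → S → ℝ} (hx : Continuous x)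
    (hw : Continuous w) : Continuous fun p => nashStep (x p) (w p) := by
  have hgain : ∀ a, Continuous fun p => gain (x p) (w p) a := fun a => by
    simp only [gain, posPart_def, dotProduct]
    fun_prop
  exact continuous_pi fun a => Continuous.div (by fun_prop) (by fun_prop) fun p =>
    (one_add_sum_gain_pos _ _).ne'

-- At a fixed point the gains are proportional to `x`, so the sum of their squares is proportional
-- to `∑ a, x a * (w a - x ⬝ᵥ w) = 0`.
lemma le_dotProduct_of_isFixedPt_nashStep {x w : S → ℝ} (hx : ∑ a, x a = 1)
    (hfix : nashStep x w = x) (a : S) : w a ≤ x ⬝ᵥ w := by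
  have hgain : ∀ b, gain x w b = x b * ∑ c, gain x w c := fun b => by
    have hb := (div_eq_iff (one_add_sum_gain_pos x w).ne').1 (congrFun hfix b)
    linarith
  have hsq : ∑ b, gain x w b ^ 2 = 0 := by
    calc ∑ b, gain x w b ^ 2 = ∑ b, gain x w b * (w b - x ⬝ᵥ w) :=
          Finset.sum_congr rfl fun b _ => by
            rcases le_total 0 (w b - x ⬝ᵥ w) with h | h
            · rw [gain, posPart_of_nonneg h, sq]
            · rw [gain, posPart_of_nonpos h, sq, zero_mul, zero_mul]
      _ = ∑ b, (∑ c, gain x w c) * (x b * w b - x b * (x ⬝ᵥ w)) :=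
          Finset.sum_congr rfl fun b _ => by rw [hgain b]; ring
      _ = (∑ c, gain x w c) * (x ⬝ᵥ w - (∑ b, x b) * (x ⬝ᵥ w)) := by
          rw [← Finset.mul_sum, Finset.sum_sub_distrib, ← Finset.sum_mul, dotProduct]
      _ = 0 := by rw [hx, one_mul, sub_self, mul_zero]
  have hzero : gain x w a = 0 := pow_eq_zero_iff two_ne_zero |>.1 <|
    (Finset.sum_eq_zero_iff_of_nonneg fun _ _ => sq_nonneg _).1 hsq a (Finset.mem_univ a)
  exact sub_nonpos.1 (posPart_eq_zero.1 hzero)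

end NashStep

section Game

variable {I : Type*} [Fintype I] [DecidableEq I] {S : I → Type*} [∀ i, Fintype (S i)]

/-- The expectation of the payoff `v` when the players choose independently according to `σ`. -/
def expectedPayoff (v : (∀ j, S j) → ℝ) (σ : ∀ j, S j → ℝ) : ℝ :=
  ∑ s : ∀ j, S j, (∏ j, σ j (s j)) * v s

/-- A mixed profile `σ` is a Nash equilibrium of the game with payoffs `u` if no player gains by
deviating to another mixed strategy. -/
def IsMixedNashEquilibrium (u : I → (∀ j, S j) → ℝ) (σ : ∀ i, S i → ℝ) : Prop :=
  (∀ i, σ i ∈ stdSimplex ℝ (S i)) ∧ ∀ i, ∀ τ ∈ stdSimplex ℝ (S i),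
    expectedPayoff (u i) (update σ i τ) ≤ expectedPayoff (u i) σ

open Classical in
/-- The payoff to player `i` of each of their pure strategies, the others playing `σ`. -/
noncomputable def purePayoff (u : I → (∀ j, S j) → ℝ) (σ : ∀ i, S i → ℝ) (i : I) (a : S i) : ℝ :=
  expectedPayoff (u i) (update σ i (Pi.single a 1))

lemma expectedPayoff_update (u : I → (∀ j, S j) → ℝ) (σ : ∀ i, S i → ℝ) (i : I) (τ : S i → ℝ) :
    expectedPayoff (u i) (update σ i τ) = τ ⬝ᵥ purePayoff u σ i := by
  classical
  have hprod : ∀ (ρ : S i → ℝ) (s : ∀ j, S j), ∏ j, update σ i ρ j (s j) =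
      ρ (s i) * ∏ j ∈ Finset.univ.erase i, σ j (s j) := fun ρ s => by
    rw [← Finset.mul_prod_erase _ _ (Finset.mem_univ i), update_self]
    congr 1
    exact Finset.prod_congr rfl fun j hj => by rw [update_of_ne (Finset.ne_of_mem_erase hj)]
  simp only [dotProduct, purePayoff, expectedPayoff, hprod, Finset.mul_sum]
  rw [Finset.sum_comm]
  simp [Pi.single_apply, mul_assoc]

lemma continuous_purePayoff (u : I → (∀ j, S j) → ℝ) (i : I) :
    Continuous fun σ => purePayoff u σ i := by
  classical
  have hpayoff : Continuous (expectedPayoff (u i)) := by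
    unfold expectedPayoff
    fun_prop
  exact continuous_pi fun a => hpayoff.comp (continuous_id.update i continuous_const)

lemma isMixedNashEquilibrium_of_isFixedPt_nashStep {u : I → (∀ j, S j) → ℝ} {σ : ∀ i, S i → ℝ}
    (hσ : ∀ i, σ i ∈ stdSimplex ℝ (S i)) (hfix : ∀ i, nashStep (σ i) (purePayoff u σ i) = σ i) :
    IsMixedNashEquilibrium u σ := by
  refine ⟨hσ, fun i τ hτ => ?_⟩
  have hle := le_dotProduct_of_isFixedPt_nashStep (hσ i).2 (hfix i)
  calc expectedPayoff (u i) (update σ i τ) = ∑ a, τ a * purePayoff u σ i a :=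
        expectedPayoff_update u σ i τ
    _ ≤ ∑ a, τ a * (σ i ⬝ᵥ purePayoff u σ i) :=
        Finset.sum_le_sum fun a _ => mul_le_mul_of_nonneg_left (hle a) (hτ.1 a)
    _ = σ i ⬝ᵥ purePayoff u σ i := by rw [← Finset.sum_mul, hτ.2, one_mul]
    _ = expectedPayoff (u i) σ := by rw [← expectedPayoff_update, update_eq_self]

theorem exists_isMixedNashEquilibrium [∀ i, Nonempty (S i)] (u : I → (∀ j, S j) → ℝ) :
    ∃ σ, IsMixedNashEquilibrium u σ := by
  classical
  obtain ⟨σ, hσ, hfix⟩ := exists_isFixedPt_of_isCompact_of_convex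
    (f := fun (σ : ∀ i, S i → ℝ) i => nashStep (σ i) (purePayoff u σ i))
    (univ_pi_nonempty_iff.2 fun i => ⟨_, single_mem_stdSimplex ℝ (Classical.arbitrary (S i))⟩)
    (isCompact_univ_pi fun i => isCompact_stdSimplex ℝ (S i))
    (convex_pi fun i _ => convex_stdSimplex ℝ (S i))
    (continuous_pi fun i =>
      continuous_nashStep (continuous_apply i) (continuous_purePayoff u i)).continuousOn
    fun σ hσ i hi => nashStep_mem_stdSimplex (hσ i hi) _
  exact ⟨σ, isMixedNashEquilibrium_of_isFixedPt_nashStep (fun i => hσ i (mem_univ i))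
    fun i => congrFun hfix i⟩

end Game

theorem stmt_2_general {Λ : Type*} {I : Λ → Type*} [∀ l, Fintype (I l)] [∀ l, DecidableEq (I l)]
    {S : ∀ l, I l → Type*} [∀ l i, Fintype (S l i)] [∀ l i, Nonempty (S l i)]
    (u : ∀ l, I l → (∀ j, S l j) → ℝ) :
    ∃ σ : ∀ l, ∀ i, S l i → ℝ, ∀ l, IsMixedNashEquilibrium (u l) (σ l) := by
  choose σ hσ using fun l => exists_isMixedNashEquilibrium (u l)
  exact ⟨σ, hσ⟩

/-- A finite family of finite games has a family of mixed strategy Nash equilibria. -/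
theorem stmt_2 (Λ : Type) [Fintype Λ] [Nonempty Λ]
    (I : Λ → Type) [∀ l, Fintype (I l)] [∀ l, Nonempty (I l)] [∀ l, DecidableEq (I l)]
    (S : ∀ l, I l → Type) [∀ l i, Fintype (S l i)] [∀ l i, Nonempty (S l i)]
    (u : ∀ l, I l → (∀ j, S l j) → ℝ) :
    ∃ σ : ∀ l, ∀ i, S l i → ℝ,
      ∀ l,
        (∀ i, (∀ a, 0 ≤ σ l i a) ∧ ∑ a, σ l i a = 1) ∧
        (∀ i (τ : S l i → ℝ), (∀ a, 0 ≤ τ a) → ∑ a, τ a = 1 →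
          ∑ s : ∀ j, S l j, (∏ j, Function.update (σ l) i τ j (s j)) * u l i s ≤
            ∑ s : ∀ j, S l j, (∏ j, σ l j (s j)) * u l i s) := by
  obtain ⟨σ, hσ⟩ := stmt_2_general u
  exact ⟨σ, fun l => ⟨(hσ l).1, fun i τ h0 h1 => (hσ l).2 i τ ⟨h0, h1⟩⟩⟩
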